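/- Probabilistic form of the forgery bound: let w_1, …, w_m ∈ F^N be linearly independent, y ∈ F^N with y ∉ span(w_1, …, w_m), and t_1, …, t_m ∈ F. Let S be the (nonempty, finite) set {k ∈ F^N : w_i · k = t_i for all i}. If k is drawn uniformly at random from S, then for every t* ∈ F the probability that y · k = t* equals 1/q. -/

import Mathlib

/-!
Some `v` is orthogonal to every `w i` but satisfies `y ⬝ᵥ v = 1`, because `y` lies outside their
span. Translating by multiples of `v` preserves `S` and permutes the fibres of `k ↦ y ⬝ᵥ k` on `S`
transitively, so these fibres are equinumerous and `y ⬝ᵥ k` is uniform on the field.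
-/

open Finset

theorem exists_dotProduct_eq_one_of_notMem_span {K n : Type*} [Field K] [Fintype n]
    {s : Set (n → K)} {y : n → K} (hy : y ∉ Submodule.span K s) :
    ∃ v : n → K, (∀ x ∈ s, x ⬝ᵥ v = 0) ∧ y ⬝ᵥ v = 1 := by
  classical
  obtain ⟨f, hfy, hf⟩ := Submodule.exists_le_ker_of_notMem hy
  obtain ⟨u, rfl⟩ := (dotProductEquiv K n).surjective f
  have hu : ∀ x ∈ s, x ⬝ᵥ u = 0 := fun x hx ↦ by
    simpa [dotProduct_comm] using hf (Submodule.subset_span hx)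
  have hyu : y ⬝ᵥ u ≠ 0 := by simpa [dotProduct_comm] using hfy
  refine ⟨(y ⬝ᵥ u)⁻¹ • u, fun x hx ↦ ?_, ?_⟩
  · rw [dotProduct_smul, hu x hx, smul_zero]
  · rw [dotProduct_smul, smul_eq_mul, inv_mul_cancel₀ hyu]

theorem card_fiber_eq_card_fiber_of_add_mem {G A : Type*} [AddGroup G] [AddGroup A]
    [DecidableEq A] (f : G →+ A) {S : Finset G}
    (hS : ∀ a, ∃ g, f g = a ∧ ∀ k ∈ S, k + g ∈ S) (a b : A) :
    #{k ∈ S | f k = a} = #{k ∈ S | f k = b} := by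
  have card_le (a b : A) : #{k ∈ S | f k = a} ≤ #{k ∈ S | f k = b} := by
    obtain ⟨g, hg, hgS⟩ := hS (-a + b)
    refine card_le_card_of_injOn (· + g) (fun k hk ↦ ?_) (add_left_injective g).injOn
    obtain ⟨hkS, rfl⟩ := mem_filter.mp hk
    exact mem_filter.mpr ⟨hgS k hkS, by rw [map_add, hg, add_neg_cancel_left]⟩
  exact (card_le a b).antisymm (card_le b a)

theorem card_eq_card_mul_card_fiber {α β : Type*} [Fintype β] [DecidableEq β] {S : Finset α}
    {f : α → β} (hf : ∀ a b, #{x ∈ S | f x = a} = #{x ∈ S | f x = b}) (b : β) :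
    #S = Fintype.card β * #{x ∈ S | f x = b} := by
  calc #S = ∑ a, #{x ∈ S | f x = a} := card_eq_sum_card_fiberwise fun _ _ ↦ mem_univ _
    _ = ∑ _ : β, #{x ∈ S | f x = b} := sum_congr rfl fun a _ ↦ hf a b
    _ = Fintype.card β * #{x ∈ S | f x = b} := by rw [sum_const, card_univ, smul_eq_mul]

theorem toOuterMeasure_uniformOfFinset_fiber {α β : Type*} [Fintype β] [DecidableEq β]
    {S : Finset α} (hne : S.Nonempty) {f : α → β}
    (hf : ∀ a b, #{x ∈ S | f x = a} = #{x ∈ S | f x = b}) (b : β) :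
    (PMF.uniformOfFinset S hne).toOuterMeasure {x | f x = b} = 1 / Fintype.card β := by
  classical
  have hcard : #S = Fintype.card β * #{x ∈ S | f x = b} := card_eq_card_mul_card_fiber hf b
  have hfiber : #{x ∈ S | f x = b} ≠ 0 := right_ne_zero_of_mul (hcard ▸ hne.card_ne_zero)
  calc (PMF.uniformOfFinset S hne).toOuterMeasure {x | f x = b}
    _ = #{x ∈ S | f x = b} / #S := by
      simp only [PMF.toOuterMeasure_uniformOfFinset_apply, Set.mem_ofPred_eq]
    _ = 1 * #{x ∈ S | f x = b} / (Fintype.card β * #{x ∈ S | f x = b}) := by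
      rw [hcard, Nat.cast_mul, one_mul]
    _ = 1 / Fintype.card β :=
      ENNReal.mul_div_mul_right _ _ (Nat.cast_ne_zero.mpr hfiber) (ENNReal.natCast_ne_top _)

theorem forgery_probability_bound_general {K ι n : Type*} [Field K] [Fintype K] [Fintype n]
    {w : ι → n → K} {y : n → K} (hy : y ∉ Submodule.span K (Set.range w)) {t : ι → K}
    {S : Finset (n → K)} (hS : ∀ k, k ∈ S ↔ ∀ i, w i ⬝ᵥ k = t i) (hne : S.Nonempty) (c : K) :
    (PMF.uniformOfFinset S hne).toOuterMeasure {k | y ⬝ᵥ k = c} = 1 / Fintype.card K := by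
  classical
  obtain ⟨v, hwv, hyv⟩ := exists_dotProduct_eq_one_of_notMem_span hy
  have add_smul_mem (a : K) (k : n → K) (hk : k ∈ S) : k + a • v ∈ S := by
    refine (hS _).mpr fun i ↦ ?_
    rw [dotProduct_add, dotProduct_smul, hwv _ ⟨i, rfl⟩, smul_zero, add_zero, (hS k).mp hk i]
  have dotProduct_smul_v (a : K) : y ⬝ᵥ (a • v) = a := by
    rw [dotProduct_smul, hyv, smul_eq_mul, mul_one]
  exact toOuterMeasure_uniformOfFinset_fiber hne
    (card_fiber_eq_card_fiber_of_add_mem (dotProductEquiv K n y).toAddMonoidHom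
      fun a ↦ ⟨a • v, dotProduct_smul_v a, add_smul_mem a⟩) c

/-- probabilistic form of the forgery bound.  Let `w_1, …, w_m ∈ F^N`
be linearly independent, `y ∉ span(w_1, …, w_m)`, and let `S` be the (nonempty,
finite) set of keys `k` with `w_i · k = t_i` for all `i`.  If `k` is drawn uniformly
at random from `S`, then for every `t*` the probability that `y · k = t*` is `1/q`. -/
theorem forgery_probability_bound
    (q N m : ℕ) (hq : q.Prime)
    (w : Fin m → Fin N → ZMod q)
    (hw : LinearIndependent (ZMod q) w)
    (y : Fin N → ZMod q)
    (hy : y ∉ Submodule.span (ZMod q) (Set.range w))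
    (t : Fin m → ZMod q)
    (S : Finset (Fin N → ZMod q))
    (hS : ∀ k : Fin N → ZMod q,
      k ∈ S ↔ ∀ i : Fin m, (∑ r : Fin N, w i r * k r) = t i)
    (hne : S.Nonempty) (tstar : ZMod q) :
    (PMF.uniformOfFinset S hne).toOuterMeasure
        {k : Fin N → ZMod q | (∑ r : Fin N, y r * k r) = tstar}
      = 1 / (q : ENNReal) := by
  have : Fact q.Prime := ⟨hq⟩
  simpa only [dotProduct, ZMod.card] using forgery_probability_bound_general hy hS hne tstar
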